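/- Let A = ⟨Q,Σ⟩ be a PFA with |Q| = n and |Σ| = m, let ℓ > 0, let φ be a satisfying assignment for the SAT instance (V,C) encoding (A,ℓ), let χ : {1,…,ℓ} → {1,…,m} assign to each t the unique i with φ(x_{i,t}) = 1, let w = a_{χ(1)}⋯a_{χ(ℓ)}, and let w_t denote the length-t prefix of w (w_0 = ε). Then for each t = 0,1,…,ℓ and each k ∈ {1,…,n}, if q_k ∈ δ(Q,w_t) then φ(y_{k,t}) = 1. -/

import Mathlib

open Set

/-- The extension of the transition function of a PFA (with states `Fin n` and letters
`Fin m`) to subsets of states and words: `δ(S,ε) = S`, `δ(S,va) = ⋃_{q ∈ δ(S,v)} δ(q,a)`. -/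
def pfaExt {n m : ℕ} (δ : Fin n → Fin m → Option (Fin n))
    (S : Set (Fin n)) (w : List (Fin m)) : Set (Fin n) :=
  w.foldl (fun T a => {p | ∃ q ∈ T, δ q a = some p}) S

/-- A nonempty word `w = a₁⋯a_ℓ` is carefully synchronizing for the PFA `δ` if (C1) its
first letter is defined at every state, (C2) for `1 < t ≤ ℓ` the letter `a_t` is defined
at every state of `δ(Q, a₁⋯a_{t-1})`, and (C3) `|δ(Q,w)| = 1`. -/
def CarefulSync {n m : ℕ} (δ : Fin n → Fin m → Option (Fin n)) (w : List (Fin m)) : Prop :=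
  w ≠ [] ∧
  (∀ t : Fin w.length, ∀ q ∈ pfaExt δ Set.univ (w.take t.val), (δ q (w.get t)).isSome) ∧
  (pfaExt δ Set.univ w).ncard = 1

/-- Boolean variables of the SAT instance encoding `(A, ℓ)`: letter variables `x i t`
(`1 ≤ i ≤ m`, `1 ≤ t ≤ ℓ`) and state variables `y j t` (`1 ≤ j ≤ n`, `0 ≤ t ≤ ℓ`). -/
inductive SatVar (n m ℓ : ℕ) : Type where
  | x : Fin m → Fin ℓ → SatVar n m ℓ
  | y : Fin n → Fin (ℓ + 1) → SatVar n m ℓ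
deriving DecidableEq

/-- A literal: a variable together with a polarity (`true` = positive, `false` = negated). -/
abbrev SatLit (n m ℓ : ℕ) := SatVar n m ℓ × Bool

/-- A clause is a disjunction of literals, represented as a list. -/
abbrev SatClause (n m ℓ : ℕ) := List (SatLit n m ℓ)

/-- A truth assignment satisfies a clause if it makes at least one of its literals true. -/
def SatisfiesClause {n m ℓ : ℕ} (φ : SatVar n m ℓ → Bool) (c : SatClause n m ℓ) : Prop :=
  ∃ l ∈ c, φ l.1 = l.2

/-- A truth assignment satisfies a set of clauses if it satisfies every clause in it. -/
def Satisfies {n m ℓ : ℕ} (φ : SatVar n m ℓ → Bool) (C : Set (SatClause n m ℓ)) : Prop :=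
  ∀ c ∈ C, SatisfiesClause φ c

/-- The group `I` of initial clauses: the unit clauses `y_{j,0}` for `1 ≤ j ≤ n`. -/
def clausesI (n m ℓ : ℕ) : Set (SatClause n m ℓ) :=
  {c | ∃ j : Fin n, c = [(SatVar.y j 0, true)]}

/-- The group `L` of letter clauses: for each `t`, the clause `x_{1,t} ∨ ⋯ ∨ x_{m,t}`
and the clauses `¬x_{r,t} ∨ ¬x_{s,t}` for `1 ≤ r < s ≤ m`. -/
def clausesL (n m ℓ : ℕ) : Set (SatClause n m ℓ) :=
  {c | ∃ t : Fin ℓ, c = (List.finRange m).map fun i => ((SatVar.x i t : SatVar n m ℓ), true)} ∪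
  {c | ∃ t : Fin ℓ, ∃ r s : Fin m, r < s ∧
    c = [(SatVar.x r t, false), (SatVar.x s t, false)]}

/-- The group `T` of transition clauses: for each `t` and each pair `(q_j, a_i)`, the
clause `¬y_{j,t-1} ∨ ¬x_{i,t} ∨ y_{k,t}` if `δ(q_j, a_i) = {q_k}`, and the clause
`¬y_{j,t-1} ∨ ¬x_{i,t}` if `δ(q_j, a_i)` is undefined. -/
def clausesT {n m : ℕ} (δ : Fin n → Fin m → Option (Fin n)) (ℓ : ℕ) :
    Set (SatClause n m ℓ) :=
  {c | ∃ (t : Fin ℓ) (j : Fin n) (i : Fin m) (k : Fin n), δ j i = some k ∧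
    c = [(SatVar.y j t.castSucc, false), (SatVar.x i t, false), (SatVar.y k t.succ, true)]} ∪
  {c | ∃ (t : Fin ℓ) (j : Fin n) (i : Fin m), δ j i = none ∧
    c = [(SatVar.y j t.castSucc, false), (SatVar.x i t, false)]}

/-- The group `S` of synchronization clauses: `¬y_{r,ℓ} ∨ ¬y_{s,ℓ}` for `1 ≤ r < s ≤ n`. -/
def clausesS (n m ℓ : ℕ) : Set (SatClause n m ℓ) :=
  {c | ∃ r s : Fin n, r < s ∧
    c = [(SatVar.y r (Fin.last ℓ), false), (SatVar.y s (Fin.last ℓ), false)]}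

/-- The set `C = I ∪ L ∪ T ∪ S` of clauses of the SAT instance encoding `(A, ℓ)`. -/
def encodingClauses {n m : ℕ} (δ : Fin n → Fin m → Option (Fin n)) (ℓ : ℕ) :
    Set (SatClause n m ℓ) :=
  clausesI n m ℓ ∪ clausesL n m ℓ ∪ clausesT δ ℓ ∪ clausesS n m ℓ

theorem pfaExt_nil {n m : ℕ} (δ : Fin n → Fin m → Option (Fin n)) (S : Set (Fin n)) :
    pfaExt δ S [] = S :=
  rfl

theorem mem_pfaExt_concat {n m : ℕ} {δ : Fin n → Fin m → Option (Fin n)} {S : Set (Fin n)}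
    {w : List (Fin m)} {a : Fin m} {p : Fin n} :
    p ∈ pfaExt δ S (w ++ [a]) ↔ ∃ q ∈ pfaExt δ S w, δ q a = some p := by
  simp only [pfaExt, List.foldl_append, List.foldl_cons, List.foldl_nil, mem_ofPred_eq]

theorem take_succ_map_finRange {α : Type*} {ℓ : ℕ} (f : Fin ℓ → α) (t : Fin ℓ) :
    ((List.finRange ℓ).map f).take (t + 1) = ((List.finRange ℓ).map f).take t ++ [f t] := by
  have ht : (t : ℕ) < ((List.finRange ℓ).map f).length := by simp
  simp [List.take_succ_eq_append_getElem ht]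

section Clauses

variable {n m ℓ : ℕ} {φ : SatVar n m ℓ → Bool}

theorem Satisfies.mono {C D : Set (SatClause n m ℓ)} (hD : Satisfies φ D) (hCD : C ⊆ D) :
    Satisfies φ C :=
  fun c hc => hD c (hCD hc)

theorem clausesI_subset_encodingClauses (δ : Fin n → Fin m → Option (Fin n)) :
    clausesI n m ℓ ⊆ encodingClauses δ ℓ :=
  fun _ hc => Or.inl (Or.inl (Or.inl hc))

theorem clausesT_subset_encodingClauses (δ : Fin n → Fin m → Option (Fin n)) :
    clausesT δ ℓ ⊆ encodingClauses δ ℓ :=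
  fun _ hc => Or.inl (Or.inr hc)

theorem Satisfies.y_zero_eq_true (hI : Satisfies φ (clausesI n m ℓ)) (j : Fin n) :
    φ (SatVar.y j 0) = true := by
  simpa [SatisfiesClause] using hI [(SatVar.y j 0, true)] ⟨j, rfl⟩

theorem Satisfies.y_succ_eq_true {δ : Fin n → Fin m → Option (Fin n)}
    (hT : Satisfies φ (clausesT δ ℓ)) {t : Fin ℓ} {j k : Fin n} {i : Fin m}
    (hδ : δ j i = some k) (hy : φ (SatVar.y j t.castSucc) = true)
    (hx : φ (SatVar.x i t) = true) : φ (SatVar.y k t.succ) = true := by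
  have hclause : SatisfiesClause φ
      [(SatVar.y j t.castSucc, false), (SatVar.x i t, false), (SatVar.y k t.succ, true)] :=
    hT _ (Or.inl ⟨t, j, i, k, hδ, rfl⟩)
  simpa [SatisfiesClause, hy, hx] using hclause

end Clauses

theorem sat_active_state_variable_true_general {n m ℓ : ℕ}
    {δ : Fin n → Fin m → Option (Fin n)} {φ : SatVar n m ℓ → Bool}
    (hT : Satisfies φ (clausesT δ ℓ)) {S : Set (Fin n)}
    (hS : ∀ j ∈ S, φ (SatVar.y j 0) = true) {χ : Fin ℓ → Fin m}
    (hχ : ∀ t : Fin ℓ, φ (SatVar.x (χ t) t) = true) (t : Fin (ℓ + 1)) (k : Fin n)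
    (hk : k ∈ pfaExt δ S (((List.finRange ℓ).map χ).take t.val)) :
    φ (SatVar.y k t) = true := by
  induction t using Fin.induction generalizing k with
  | zero =>
    rw [Fin.val_zero, List.take_zero, pfaExt_nil] at hk
    exact hS k hk
  | succ t ih =>
    rw [Fin.val_succ, take_succ_map_finRange, mem_pfaExt_concat] at hk
    obtain ⟨q, hq, hqk⟩ := hk
    exact hT.y_succ_eq_true hqk (ih q hq) (hχ t)

/-- Claim 2: with `φ` a satisfying assignment of the SAT instance encoding `(A, ℓ)`,
`χ` the map assigning to each `t` the unique `i` with `φ(x_{i,t}) = 1`, and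
`w = a_{χ(1)} ⋯ a_{χ(ℓ)}`, for each `t = 0, 1, …, ℓ` and each state `q_k`, if
`q_k ∈ δ(Q, w_t)` (where `w_t` is the length-`t` prefix of `w`), then `φ(y_{k,t}) = 1`. -/
theorem sat_active_state_variable_true {n m ℓ : ℕ} (hn : 0 < n) (hm : 0 < m) (hℓ : 0 < ℓ)
    (δ : Fin n → Fin m → Option (Fin n))
    (φ : SatVar n m ℓ → Bool) (hφ : Satisfies φ (encodingClauses δ ℓ))
    (χ : Fin ℓ → Fin m) (hχ : ∀ t : Fin ℓ, ∀ i : Fin m, φ (SatVar.x i t) = true ↔ i = χ t) :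
    ∀ t : Fin (ℓ + 1), ∀ k : Fin n,
      k ∈ pfaExt δ Set.univ (((List.finRange ℓ).map χ).take t.val) →
        φ (SatVar.y k t) = true :=
  sat_active_state_variable_true_general (hφ.mono (clausesT_subset_encodingClauses δ))
    (fun j _ => (hφ.mono (clausesI_subset_encodingClauses δ)).y_zero_eq_true j)
    (fun t => (hχ t (χ t)).2 rfl)
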